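/- arXiv:1902.05438 — 2 statements merged into one kernel-verified Lean document; each statement's English description precedes it below -/
import Mathlib

section
/- Let d ≥ 1, let Λ be a full-rank lattice in ℝ^d, let N ≥ 1, and let v₁, …, v_N ∈ ℝ^d satisfy v_j − v_k ∉ Λ whenever j ≠ k. Let p : ℝ → ℝ be nonnegative on (0,∞), and let f : ℝ^d → ℂ be a Schwartz function that is real-valued, satisfies Re f(x) ≤ p(|x|) for all x ≠ 0, and whose Fourier transform f̂(y) = ∫_{ℝ^d} f(x) e^{−2πi⟨x,y⟩} dx is real-valued and nonnegative for all y. Then, in the extended nonnegative reals [0,∞], (1/N) · Σ_{j,k=1}^{N} Σ_{x ∈ Λ, x + v_j − v_k ≠ 0} p(|x + v_j − v_k|) ≥ (N / covol(Λ)) · f̂(0) − f(0), where the right-hand side is the extended-real value ENNReal.ofReal of the indicated real number. -/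
open scoped ENNReal Classical

noncomputable section

/-- The Fourier transform `f̂(y) = ∫ f(x) e^{-2πi⟨x,y⟩} dx` of a Schwartz function. -/
def FT {d : ℕ} (f : SchwartzMap (EuclideanSpace ℝ (Fin d)) ℂ) :
    SchwartzMap (EuclideanSpace ℝ (Fin d)) ℂ :=
  SchwartzMap.fourierTransformCLM ℂ f

/-!
For a Schwartz function `f`, the sum of `f (x + v j - v k)` over `x ∈ Λ` and all `j`, `k` is, by
Poisson summation,
`(covol Λ)⁻¹ * ∑ y ∈ Λ*, 𝓕 f y * |∑ j, exp (2 π i ⟪v j, y⟫)| ^ 2`.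
All terms of the dual sum are nonnegative, so it is at least its term `N ^ 2 * 𝓕 f 0 / covol Λ` at
`y = 0`. In the original sum the `N` terms with `x + v j - v k = 0` contribute `N * f 0`, and each
of the others is at most the energy of the corresponding difference.
-/

open MeasureTheory Module UnitAddTorus
open scoped FourierTransform SchwartzMap InnerProductSpace

section Periodization

variable {E F : Type*}

section

variable [AddCommGroup E] [AddCommMonoid F] [TopologicalSpace F] (L : Submodule ℤ E)

/-- The sum over the translates by the lattice `L` of a function `f`. Where the sum does not
converge, it has the junk value `0`. -/
def periodization (f : E → F) (t : E) : F :=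
  ∑' x : L, f (x + t)

lemma periodization_add_left (f : E → F) {x : E} (hx : x ∈ L) (t : E) :
    periodization L f (x + t) = periodization L f t := by
  simpa only [periodization, Equiv.coe_addRight, Submodule.coe_add, add_assoc] using
    (Equiv.addRight (⟨x, hx⟩ : L)).tsum_eq fun y : L ↦ f (y + t)

end

variable [NormedAddCommGroup E] [NormedSpace ℝ E] [FiniteDimensional ℝ E] [NormedAddCommGroup F]
  [NormedSpace ℝ F] (L : Submodule ℤ E) [DiscreteTopology L]

lemma summable_one_add_norm_pow_inv {n : ℕ} (hn : finrank ℤ L < n) :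
    Summable fun x : L ↦ ((1 + ‖x‖) ^ n)⁻¹ := by
  refine (ZLattice.summable_norm_pow_inv L n hn).of_norm_bounded_eventually ?_
  filter_upwards [(Set.finite_singleton (0 : L)).eventually_cofinite_notMem] with x hx
  have : 0 < ‖x‖ := norm_pos_iff.2 hx
  rw [Real.norm_of_nonneg (by positivity), inv_pow]
  gcongr
  linarith

lemma exists_summable_norm_schwartz_add_le (f : 𝓢(E, F)) (R : ℝ) :
    ∃ u : L → ℝ, Summable u ∧ ∀ t, ‖t‖ ≤ R → ∀ x : L, ‖f (x + t)‖ ≤ u x := by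
  let k := finrank ℤ L + 1
  obtain ⟨C, hC⟩ : ∃ C, ∀ y, (1 + ‖y‖) ^ k * ‖f y‖ ≤ C :=
    ⟨_, fun y ↦ by
      simpa only [norm_iteratedFDeriv_zero] using
        f.one_add_le_sup_seminorm_apply (𝕜 := ℝ) (m := (k, 0)) le_rfl le_rfl y⟩
  refine ⟨fun x ↦ (1 + R) ^ k * C * ((1 + ‖x‖) ^ k)⁻¹,
    (summable_one_add_norm_pow_inv L (Nat.lt_succ_self _)).mul_left _, fun t ht x ↦ ?_⟩
  have peetre : 1 + ‖x‖ ≤ (1 + ‖t‖) * (1 + ‖(x : E) + t‖) := by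
    have : ‖x‖ ≤ ‖(x : E) + t‖ + ‖t‖ := by simpa using norm_sub_le ((x : E) + t) t
    nlinarith [norm_nonneg t, norm_nonneg ((x : E) + t)]
  beta_reduce
  rw [← div_eq_mul_inv, le_div_iff₀' (by positivity)]
  calc (1 + ‖x‖) ^ k * ‖f (x + t)‖
      ≤ ((1 + ‖t‖) * (1 + ‖(x : E) + t‖)) ^ k * ‖f (x + t)‖ := by gcongr
    _ = (1 + ‖t‖) ^ k * ((1 + ‖(x : E) + t‖) ^ k * ‖f (x + t)‖) := by rw [mul_pow, mul_assoc]
    _ ≤ (1 + R) ^ k * C := by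
        have hR : 0 ≤ R := (norm_nonneg t).trans ht
        gcongr
        exact hC _

variable [CompleteSpace F]

lemma summable_schwartz_add (f : 𝓢(E, F)) (t : E) : Summable fun x : L ↦ f (x + t) := by
  obtain ⟨u, hu, hfu⟩ := exists_summable_norm_schwartz_add_le L f ‖t‖
  exact hu.of_norm_bounded (hfu t le_rfl)

lemma continuous_periodization_schwartz (f : 𝓢(E, F)) : Continuous (periodization L f) := by
  refine continuous_iff_continuousAt.2 fun t ↦ ?_
  obtain ⟨u, hu, hfu⟩ := exists_summable_norm_schwartz_add_le L f (‖t‖ + 1)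
  have hcont : ContinuousOn (periodization L f) (Metric.ball 0 (‖t‖ + 1)) :=
    continuousOn_tsum (fun x ↦ (f.continuous.comp (by fun_prop)).continuousOn) hu
      fun x s hs ↦ hfu s (mem_ball_zero_iff.1 hs).le x
  exact hcont.continuousAt (Metric.isOpen_ball.mem_nhds (by simp))

end Periodization

lemma setIntegral_tsum_vadd {G α F : Type*} [AddGroup G] [AddAction G α] [Countable G]
    [MeasurableSpace α] [MeasurableConstVAdd G α] [NormedAddCommGroup F] [NormedSpace ℝ F]
    {s : Set α} {μ : Measure α} [VAddInvariantMeasure G α μ] (hs : IsAddFundamentalDomain G s μ)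
    {f : α → F} (hf : Integrable f μ) :
    ∫ x in s, ∑' g : G, f (g +ᵥ x) ∂μ = ∫ x, f x ∂μ := by
  rw [hs.integral_eq_tsum'' f hf, integral_tsum]
  · intro g
    exact (hf.aestronglyMeasurable.comp_quasiMeasurePreserving
      (measurePreserving_vadd g μ).quasiMeasurePreserving).restrict
  · rw [← hs.lintegral_eq_tsum'' fun x ↦ ‖f x‖ₑ]
    exact hf.hasFiniteIntegral.ne

lemma setIntegral_smul_periodization {E F : Type*} [NormedAddCommGroup E]
    [MeasurableSpace E] [BorelSpace E] [NormedAddCommGroup F] [NormedSpace ℂ F] {μ : Measure E}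
    [μ.IsAddLeftInvariant] {L : Submodule ℤ E} [Countable L] {s : Set E}
    (hs : IsAddFundamentalDomain L s μ) {φ : E → ℂ} (hφ : ∀ x ∈ L, ∀ t, φ (x + t) = φ t)
    {f : E → F} (hf : Integrable (fun x ↦ φ x • f x) μ) :
    ∫ x in s, φ x • periodization L f x ∂μ = ∫ x, φ x • f x ∂μ := by
  have : VAddInvariantMeasure L E μ :=
    inferInstanceAs <| VAddInvariantMeasure L.toAddSubgroup E μ
  rw [← setIntegral_tsum_vadd hs hf]
  refine integral_congr_ae (.of_forall fun t ↦ ?_)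
  simp only [periodization, ← tsum_const_smul'', Submodule.vadd_def, vadd_eq_add,
    hφ _ (Subtype.coe_prop _)]

section Torus

variable {E ι : Type*} [NormedAddCommGroup E] [NormedSpace ℝ E]

/-- The coordinate map `E → (ℝ / ℤ) ^ ι` of a real basis `b` of `E`, i.e. the quotient map by the
lattice spanned by `b` under the identification of the quotient with a standard torus. -/
def basisTorusMap (b : Basis ι ℝ E) : E →+ UnitAddTorus ι where
  toFun x i := b.repr x i
  map_zero' := by ext; simp
  map_add' x y := by ext; simp

lemma basisTorusMap_eq_zero_iff (b : Basis ι ℝ E) {x : E} :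
    basisTorusMap b x = 0 ↔ x ∈ Submodule.span ℤ (Set.range b) := by
  simp [funext_iff, basisTorusMap, b.mem_span_iff_repr_mem ℤ,
    AddSubgroup.mem_zmultiples_iff]

section

variable [Finite ι]

lemma isOpenQuotientMap_basisTorusMap (b : Basis ι ℝ E) : IsOpenQuotientMap (basisTorusMap b) :=
  (IsOpenQuotientMap.piMap fun _ ↦ QuotientAddGroup.isOpenQuotientMap_mk).comp
    b.equivFunL.toHomeomorph.isOpenQuotientMap

lemma exists_continuousMap_comp_basisTorusMap {X : Type*} [TopologicalSpace X] (b : Basis ι ℝ E)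
    {g : E → X} (hg : Continuous g)
    (hper : ∀ x ∈ Submodule.span ℤ (Set.range b), ∀ t, g (x + t) = g t) :
    ∃ G : C(UnitAddTorus ι, X), ∀ t, G (basisTorusMap b t) = g t := by
  have hπ := isOpenQuotientMap_basisTorusMap b
  have hfib : ∀ s t, basisTorusMap b s = basisTorusMap b t → g s = g t := fun s t hst ↦ by
    have hmem := (basisTorusMap_eq_zero_iff b).1 (show basisTorusMap b (s - t) = 0 by simp [hst])
    simpa using hper (s - t) hmem t
  let π : C(E, UnitAddTorus ι) := ⟨basisTorusMap b, hπ.continuous⟩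
  have hq : Topology.IsQuotientMap π := hπ.isQuotientMap
  exact ⟨hq.lift ⟨g, hg⟩ hfib, DFunLike.congr_fun (hq.lift_comp ⟨g, hg⟩ hfib)⟩

lemma equivFunL_preimage_pi_Ico (b : Basis ι ℝ E) :
    b.equivFunL ⁻¹' (Set.univ.pi fun _ ↦ Set.Ico 0 1) = ZSpan.fundamentalDomain b := by
  ext x
  simp

end

variable [Fintype ι] [MeasurableSpace E] [BorelSpace E] (b : Basis ι ℝ E) (μ : Measure E)
  [μ.IsAddHaarMeasure]

lemma map_equivFunL_addHaar :
    μ.map b.equivFunL = μ (ZSpan.fundamentalDomain b) • (volume : Measure (ι → ℝ)) := by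
  have : (μ.map b.equivFunL).IsAddHaarMeasure := b.equivFunL.isAddHaarMeasure_map μ
  set c := (μ.map b.equivFunL).addHaarScalarFactor volume
  have hc : μ.map b.equivFunL = c • volume := Measure.isAddLeftInvariant_eq_smul _ _
  have hμ : μ (ZSpan.fundamentalDomain b) = c := by
    rw [← equivFunL_preimage_pi_Ico, ← Measure.map_apply b.equivFunL.continuous.measurable
      (MeasurableSet.univ_pi fun _ ↦ measurableSet_Ico), hc]
    simp [volume_pi_pi]
  rw [hμ, hc]
  rfl

lemma mFourierCoeff_eq_setIntegral_fundamentalDomain {F : Type*} [NormedAddCommGroup F]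
    [NormedSpace ℂ F] (G : UnitAddTorus ι → F) (n : ι → ℤ) :
    mFourierCoeff G n = (μ.real (ZSpan.fundamentalDomain b))⁻¹ •
      ∫ x in ZSpan.fundamentalDomain b,
        mFourier (-n) (basisTorusMap b x) • G (basisTorusMap b x) ∂μ := by
  let Φ : (ι → ℝ) → F := fun t ↦ mFourier (-n) (fun i ↦ t i) • G fun i ↦ t i
  have hcube : {t : ι → ℝ | ∀ i, t i ∈ Set.Ioc ((0 : ι → ℝ) i) ((0 : ι → ℝ) i + 1)} =ᵐ[volume]
      Set.univ.pi fun _ ↦ Set.Ico (0 : ℝ) 1 := by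
    have hpi : {t : ι → ℝ | ∀ i, t i ∈ Set.Ioc ((0 : ι → ℝ) i) ((0 : ι → ℝ) i + 1)} =
        Set.univ.pi fun i ↦ Set.Ioc ((0 : ι → ℝ) i) ((1 : ι → ℝ) i) := by
      ext
      simp [Set.mem_pi]
    rw [hpi]
    exact Measure.univ_pi_Ioc_ae_eq_Icc.trans
      (Measure.univ_pi_Ico_ae_eq_Icc (f := (0 : ι → ℝ)) (g := 1)).symm
  have hμ : μ.real (ZSpan.fundamentalDomain b) ≠ 0 := by
    have := b.finiteDimensional_of_finite
    have := FiniteDimensional.proper_real E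
    rw [Measure.real, ENNReal.toReal_ne_zero]
    exact ⟨ZSpan.measure_fundamentalDomain_ne_zero b,
      (ZSpan.fundamentalDomain_isBounded b).measure_lt_top.ne⟩
  rw [mFourierCoeff_eq_integral G n 0, setIntegral_congr_set hcube, eq_inv_smul_iff₀ hμ]
  calc μ.real (ZSpan.fundamentalDomain b) • ∫ t in Set.univ.pi fun _ ↦ Set.Ico 0 1, Φ t
      = ∫ t in Set.univ.pi fun _ ↦ Set.Ico 0 1, Φ t ∂(μ.map b.equivFunL) := by
        rw [map_equivFunL_addHaar, Measure.restrict_smul, integral_smul_measure, Measure.real]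
    _ = ∫ x in ZSpan.fundamentalDomain b, Φ (b.equivFunL x) ∂μ := by
        rw [← equivFunL_preimage_pi_Ico]
        exact setIntegral_map_equiv b.equivFunL.toHomeomorph.toMeasurableEquiv Φ _

end Torus

section DualLattice

variable {E : Type*} [NormedAddCommGroup E] [InnerProductSpace ℝ E]

lemma nondegenerate_innerₗ : (innerₗ E).Nondegenerate :=
  ⟨fun x hx ↦ inner_self_eq_zero.1 (hx x), fun x hx ↦ inner_self_eq_zero.1 (hx x)⟩

/-- The dual lattice `Λ* = {y | ∀ x ∈ Λ, ⟪y, x⟫ ∈ ℤ}`, over which the dual side of Poisson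
summation runs. -/
def dualLattice (L : Submodule ℤ E) : Submodule ℤ E :=
  LinearMap.BilinForm.dualSubmodule (innerₗ E) L

variable [FiniteDimensional ℝ E] (L : Submodule ℤ E) [DiscreteTopology L] [IsZLattice ℝ L]
  {ι : Type*} (b : Basis ι ℤ L)

section

variable [Finite ι]

lemma span_dualBasis_eq_dualLattice :
    Submodule.span ℤ (Set.range (LinearMap.BilinForm.dualBasis (innerₗ E) nondegenerate_innerₗ
      (b.ofZLatticeBasis ℝ L))) = dualLattice L := by
  rw [dualLattice, ← LinearMap.BilinForm.dualSubmodule_span_of_basis, b.ofZLatticeBasis_span ℝ]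

instance discreteTopology_dualLattice : DiscreteTopology (dualLattice L) := by
  have := ZLattice.module_free ℝ L
  have := ZLattice.module_finite ℝ L
  rw [← span_dualBasis_eq_dualLattice L (Free.chooseBasis ℤ L)]
  infer_instance

/-- The basis of the dual lattice that is dual to a given basis of the lattice. -/
def dualLatticeBasis : Basis ι ℤ (dualLattice L) :=
  ((LinearMap.BilinForm.dualBasis (innerₗ E) nondegenerate_innerₗ
    (b.ofZLatticeBasis ℝ L)).restrictScalars ℤ).map
      (LinearEquiv.ofEq _ _ (span_dualBasis_eq_dualLattice L b))

lemma dualLatticeBasis_repr (y : dualLattice L) (i : ι) :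
    ((dualLatticeBasis L b).repr y i : ℝ) = ⟪(b i : E), (y : E)⟫_ℝ := by
  have := Basis.restrictScalars_repr_apply ℤ
    (LinearMap.BilinForm.dualBasis (innerₗ E) nondegenerate_innerₗ (b.ofZLatticeBasis ℝ L))
    ((LinearEquiv.ofEq _ _ (span_dualBasis_eq_dualLattice L b)).symm y) i
  simpa [dualLatticeBasis, real_inner_comm] using this

end

lemma mFourier_dualLatticeBasis_equivFun [Fintype ι] (y : dualLattice L) (x : E) :
    mFourier ((dualLatticeBasis L b).equivFun y) (basisTorusMap (b.ofZLatticeBasis ℝ L) x) =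
      𝐞 ⟪x, (y : E)⟫_ℝ := by
  let B := b.ofZLatticeBasis ℝ L
  have hsum : ⟪x, (y : E)⟫_ℝ = ∑ i, B.repr x i * (dualLatticeBasis L b).repr y i := by
    conv_lhs => rw [← B.sum_repr x, sum_inner]
    simp only [real_inner_smul_left, dualLatticeBasis_repr, B, b.ofZLatticeBasis_apply ℝ]
  simp only [mFourier, basisTorusMap, ContinuousMap.coe_mk, AddMonoidHom.coe_mk, ZeroHom.coe_mk,
    fourier_coe_apply, Real.fourierChar_apply, ← Complex.exp_sum, hsum, Basis.equivFun_apply]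
  congr 1
  push_cast
  rw [Finset.mul_sum, Finset.sum_mul]
  refine Finset.sum_congr rfl fun i _ ↦ ?_
  ring

end DualLattice

section Poisson

variable {E : Type*} [NormedAddCommGroup E] [InnerProductSpace ℝ E] [FiniteDimensional ℝ E]
  [MeasurableSpace E] [BorelSpace E] (L : Submodule ℤ E) [DiscreteTopology L] [IsZLattice ℝ L]

lemma mFourierCoeff_eq_fourier_of_comp_eq_periodization {ι F : Type*} [Fintype ι]
    [NormedAddCommGroup F] [NormedSpace ℂ F] (b : Basis ι ℤ L) {f : E → F} (hf : Integrable f)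
    {G : UnitAddTorus ι → F}
    (hG : ∀ t, G (basisTorusMap (b.ofZLatticeBasis ℝ L) t) = periodization L f t)
    (y : dualLattice L) :
    mFourierCoeff G ((dualLatticeBasis L b).equivFun y) =
      (ZLattice.covolume L)⁻¹ • 𝓕 f (y : E) := by
  let π := basisTorusMap (b.ofZLatticeBasis ℝ L)
  let φ : E → ℂ := fun x ↦ mFourier (-(dualLatticeBasis L b).equivFun y) (π x)
  have hφ : ∀ x, φ x = 𝐞 (-⟪x, (y : E)⟫_ℝ) := fun x ↦ by
    simp only [φ, π, ← map_neg, mFourier_dualLatticeBasis_equivFun, Submodule.coe_neg,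
      inner_neg_right]
  have hφL : ∀ x ∈ L, ∀ t, φ (x + t) = φ t := fun x hx t ↦ by
    have hx : π x = 0 := (basisTorusMap_eq_zero_iff _).2 (by rwa [b.ofZLatticeBasis_span ℝ])
    simp only [φ, map_add, hx, zero_add]
  have hD := ZLattice.isAddFundamentalDomain b (volume : Measure E)
  rw [mFourierCoeff_eq_setIntegral_fundamentalDomain (b.ofZLatticeBasis ℝ L) volume,
    ← ZLattice.covolume_eq_measure_fundamentalDomain L volume hD]
  congr 1
  simp only [hG]
  refine (setIntegral_smul_periodization hD hφL ?_).trans ?_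
  · simpa only [hφ, Circle.smul_def] using (Real.fourierIntegral_convergent_iff (y : E)).2 hf
  · simp only [Real.fourier_eq, hφ, Circle.smul_def]

theorem hasSum_fourierChar_smul_fourier_dualLattice (f : 𝓢(E, ℂ)) (t : E) :
    HasSum (fun y : dualLattice L ↦
      (ZLattice.covolume L)⁻¹ • (𝐞 ⟪t, (y : E)⟫_ℝ • 𝓕 f (y : E)))
      (periodization L f t) := by
  have := ZLattice.module_free ℝ L
  have := ZLattice.module_finite ℝ L
  let b := Free.chooseBasis ℤ L
  obtain ⟨G, hG⟩ := exists_continuousMap_comp_basisTorusMap (b.ofZLatticeBasis ℝ L)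
    (continuous_periodization_schwartz L f) fun x hx ↦
      periodization_add_left L f (by rwa [b.ofZLatticeBasis_span ℝ] at hx)
  have hcoeff := mFourierCoeff_eq_fourier_of_comp_eq_periodization L b f.integrable hG
  have hsum : Summable (mFourierCoeff G) := by
    rw [← (dualLatticeBasis L b).equivFun.toEquiv.summable_iff]
    have hf := summable_schwartz_add (dualLattice L) (𝓕 f) 0
    simp only [add_zero, SchwartzMap.fourier_coe] at hf
    exact (summable_congr hcoeff).2 (hf.const_smul _)
  have hseries := hasSum_mFourier_series_apply_of_summable hsum
    (basisTorusMap (b.ofZLatticeBasis ℝ L) t)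
  rw [hG, ← (dualLatticeBasis L b).equivFun.toEquiv.hasSum_iff] at hseries
  convert hseries using 2 with y
  simp only [Function.comp_apply, LinearEquiv.coe_toEquiv, hcoeff,
    mFourier_dualLatticeBasis_equivFun, SchwartzMap.fourier_coe, smul_eq_mul,
    Circle.smul_def, smul_mul_assoc, mul_comm (𝐞 _ : ℂ), b]

end Poisson

section LinearProgramming

lemma sum_sum_fourierChar_inner_sub {E κ : Type*} [NormedAddCommGroup E] [InnerProductSpace ℝ E]
    [Fintype κ] (v : κ → E) (y : E) :
    ∑ j, ∑ k, (𝐞 ⟪v j - v k, y⟫_ℝ : ℂ) = Complex.normSq (∑ j, (𝐞 ⟪v j, y⟫_ℝ : ℂ)) := by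
  rw [← Complex.mul_conj, map_sum, Finset.sum_mul_sum]
  simp only [sub_eq_add_neg (inner _ _ _), inner_sub_left, AddChar.map_add_eq_mul,
    AddChar.map_neg_eq_inv, Circle.coe_mul, Circle.coe_inv_eq_conj]

lemma ofReal_tsum_le_tsum_ofReal {α : Type*} {q : α → ℝ} (hq : Summable q) :
    ENNReal.ofReal (∑' x, q x) ≤ ∑' x, ENNReal.ofReal (q x) := by
  have hmax : Summable fun x ↦ max (q x) 0 :=
    hq.abs.of_nonneg_of_le (fun x ↦ le_max_right _ _)
      fun x ↦ max_le (le_abs_self _) (abs_nonneg _)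
  calc ENNReal.ofReal (∑' x, q x)
      ≤ ENNReal.ofReal (∑' x, max (q x) 0) :=
        ENNReal.ofReal_le_ofReal (hq.tsum_le_tsum (fun x ↦ le_max_left _ _) hmax)
    _ = ∑' x, ENNReal.ofReal (max (q x) 0) :=
        ENNReal.ofReal_tsum_of_nonneg (fun x ↦ le_max_right _ _) hmax
    _ = ∑' x, ENNReal.ofReal (q x) := by simp [ENNReal.ofReal_max]

lemma ofReal_sum_le_sum_ofReal {α : Type*} (s : Finset α) (q : α → ℝ) :
    ENNReal.ofReal (∑ x ∈ s, q x) ≤ ∑ x ∈ s, ENNReal.ofReal (q x) :=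
  Finset.le_sum_of_subadditive _ ENNReal.ofReal_zero.le (fun _ _ ↦ ENNReal.ofReal_add_le) _ _

lemma hasSum_ite_add_ne_zero {S E F : Type*} [AddGroup E] [DecidableEq E] [SetLike S E]
    [AddSubgroupClass S E] [AddCommGroup F] [TopologicalSpace F] [IsTopologicalAddGroup F]
    {L : S} {g : E → F} {w : E} {a : F} (hg : HasSum (fun x : L ↦ g (x + w)) a) :
    HasSum (fun x : L ↦ if (x : E) + w ≠ 0 then g (x + w) else 0)
      (a - if w ∈ L then g 0 else 0) := by
  split_ifs with hw
  · convert hg.sub (hasSum_ite_eq (⟨-w, neg_mem hw⟩ : L) (g 0)) using 2 with x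
    have hx : x = ⟨-w, neg_mem hw⟩ ↔ (x : E) + w = 0 := by
      rw [Subtype.ext_iff, add_eq_zero_iff_eq_neg]
    by_cases h : (x : E) + w = 0 <;> simp [hx, h]
  · have hx (x : L) : (x : E) + w ≠ 0 := fun h ↦
      hw (by simpa [← eq_neg_of_add_eq_zero_right h] using neg_mem x.2)
    simpa only [hx, sub_zero, ne_eq, not_false_eq_true, if_true] using hg

lemma ofReal_periodization_sub_le_tsum {E : Type*} [NormedAddCommGroup E] [NormedSpace ℝ E]
    [FiniteDimensional ℝ E] [DecidableEq E] (L : Submodule ℤ E) [DiscreteTopology L]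
    (f : 𝓢(E, ℂ)) {p : E → ℝ≥0∞}
    (hfp : ∀ x, x ≠ 0 → ENNReal.ofReal (f x).re ≤ p x) (w : E) :
    ENNReal.ofReal ((periodization L f w).re - if w ∈ L then (f 0).re else 0) ≤
      ∑' x : L, if (x : E) + w ≠ 0 then p (x + w) else 0 := by
  have hs : HasSum (fun x : L ↦ (f (x + w)).re) (periodization L f w).re :=
    Complex.hasSum_re (summable_schwartz_add L f w).hasSum
  have hne := hasSum_ite_add_ne_zero (g := fun x ↦ (f x).re) hs
  rw [← hne.tsum_eq]
  refine (ofReal_tsum_le_tsum_ofReal hne.summable).trans (ENNReal.tsum_le_tsum fun x ↦ ?_)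
  split_ifs with hx
  · exact hfp _ hx
  · exact ENNReal.ofReal_zero.le

variable {E κ : Type*} [NormedAddCommGroup E] [InnerProductSpace ℝ E] [FiniteDimensional ℝ E]
  [MeasurableSpace E] [BorelSpace E] (L : Submodule ℤ E) [DiscreteTopology L] [IsZLattice ℝ L]
  [Fintype κ] (v : κ → E) (f : 𝓢(E, ℂ))

lemma hasSum_fourier_normSq_dualLattice :
    HasSum (fun y : dualLattice L ↦ (ZLattice.covolume L)⁻¹ *
      (Complex.normSq (∑ j, (𝐞 ⟪v j, (y : E)⟫_ℝ : ℂ)) * (𝓕 f (y : E)).re))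
      (∑ j, ∑ k, (periodization L f (v j - v k)).re) := by
  have h := Complex.hasSum_re <| hasSum_sum fun j (_ : j ∈ Finset.univ) ↦
    hasSum_sum fun k (_ : k ∈ Finset.univ) ↦
      hasSum_fourierChar_smul_fourier_dualLattice L f (v j - v k)
  simp only [← Finset.smul_sum, Circle.smul_def, ← Finset.sum_smul,
    sum_sum_fourierChar_inner_sub] at h
  simpa only [Complex.smul_re, Complex.re_ofReal_mul, smul_eq_mul, Complex.re_sum] using h

lemma card_sq_div_covolume_mul_fourier_le_sum_periodization
    (hf : ∀ y ∈ dualLattice L, 0 ≤ (𝓕 f y).re) :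
    (Fintype.card κ : ℝ) ^ 2 / ZLattice.covolume L * (𝓕 f 0).re ≤
      ∑ j, ∑ k, (periodization L f (v j - v k)).re := by
  have hL : 0 < ZLattice.covolume L := ZLattice.covolume_pos L volume
  have hle := le_hasSum (hasSum_fourier_normSq_dualLattice L v f) 0 fun y _ ↦
    mul_nonneg (inv_nonneg.2 hL.le) (mul_nonneg (Complex.normSq_nonneg _) (hf y y.2))
  simpa [Complex.normSq_natCast, sq, div_eq_inv_mul, mul_assoc] using hle

theorem linear_programming_bound_general [DecidableEq E] [Nonempty κ]
    (hv : ∀ j k, j ≠ k → v j - v k ∉ L) {p : E → ℝ≥0∞}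
    (hfp : ∀ x, x ≠ 0 → ENNReal.ofReal (f x).re ≤ p x)
    (hf : ∀ y ∈ dualLattice L, 0 ≤ (𝓕 f y).re) :
    ENNReal.ofReal (Fintype.card κ / ZLattice.covolume L * (𝓕 f 0).re - (f 0).re) ≤
      (Fintype.card κ : ℝ≥0∞)⁻¹ *
        ∑' (j : κ) (k : κ) (x : L), if (x : E) + v j - v k ≠ 0 then p (x + v j - v k) else 0 := by
  have hdiff (j k : κ) : v j - v k ∈ L ↔ j = k :=
    ⟨not_imp_not.1 (hv j k), fun h ↦ by simp [h]⟩
  rw [mul_comm _⁻¹, ← div_eq_mul_inv, ENNReal.le_div_iff_mul_le (by simp) (by simp),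
    ← ENNReal.ofReal_natCast, ← ENNReal.ofReal_mul' (by positivity)]
  calc _
      ≤ ENNReal.ofReal (∑ j, ∑ k,
          ((periodization L f (v j - v k)).re - if v j - v k ∈ L then (f 0).re else 0)) := by
        have := card_sq_div_covolume_mul_fourier_le_sum_periodization L v f hf
        apply ENNReal.ofReal_le_ofReal
        simp only [Finset.sum_sub_distrib, hdiff, Finset.sum_ite_eq, Finset.mem_univ, if_true,
          Finset.sum_const, Finset.card_univ, nsmul_eq_mul]
        convert sub_le_sub_right this _ using 1
        ring
    _ ≤ ∑ j, ∑ k, ENNReal.ofReal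
          ((periodization L f (v j - v k)).re - if v j - v k ∈ L then (f 0).re else 0) :=
        (ofReal_sum_le_sum_ofReal _ _).trans
          (Finset.sum_le_sum fun j _ ↦ ofReal_sum_le_sum_ofReal _ _)
    _ ≤ ∑ j, ∑ k, ∑' x : L, if (x : E) + v j - v k ≠ 0 then p (x + v j - v k) else 0 := by
        simp only [add_sub_assoc]
        gcongr
        exact ofReal_periodization_sub_le_tsum L f hfp _
    _ = _ := by simp only [tsum_fintype]

end LinearProgramming

/-- The linear programming bound for the energy of a periodic configuration `⋃_j (Λ + v_j)`:
if the Schwartz function `f` is real-valued with `f(x) ≤ p(|x|)` for `x ≠ 0`, and `f̂` is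
real-valued and nonnegative, then the energy per point of the configuration is at least
`(N/covol Λ)·f̂(0) − f(0)` (computed in `[0,∞]`). -/
theorem linear_programming_bound (d : ℕ) (hd : 1 ≤ d)
    (Λ : Submodule ℤ (EuclideanSpace ℝ (Fin d))) [DiscreteTopology Λ] [IsZLattice ℝ Λ]
    (N : ℕ) (hN : 1 ≤ N) (v : Fin N → EuclideanSpace ℝ (Fin d))
    (hv : ∀ j k : Fin N, j ≠ k → v j - v k ∉ Λ)
    (p : ℝ → ℝ) (hp : ∀ r : ℝ, 0 < r → 0 ≤ p r)
    (f : SchwartzMap (EuclideanSpace ℝ (Fin d)) ℂ)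
    (hf_real : ∀ x, (f x).im = 0)
    (hf_le : ∀ x : EuclideanSpace ℝ (Fin d), x ≠ 0 → (f x).re ≤ p ‖x‖)
    (hfhat_real : ∀ y, ((FT f) y).im = 0)
    (hfhat_nonneg : ∀ y, 0 ≤ ((FT f) y).re) :
    ENNReal.ofReal (((N : ℝ) / ZLattice.covolume Λ) * ((FT f) 0).re - (f 0).re)
      ≤ (N : ℝ≥0∞)⁻¹ *
        ∑' (j : Fin N) (k : Fin N) (x : Λ),
          if (x : EuclideanSpace ℝ (Fin d)) + v j - v k ≠ 0 then
            ENNReal.ofReal (p ‖(x : EuclideanSpace ℝ (Fin d)) + v j - v k‖)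
          else 0 := by
  have : Nonempty (Fin N) := ⟨⟨0, hN⟩⟩
  have bound := linear_programming_bound_general Λ v f hv (p := fun x ↦ ENNReal.ofReal (p ‖x‖))
    (fun x hx ↦ ENNReal.ofReal_le_ofReal (hf_le x hx)) fun y _ ↦ hfhat_nonneg y
  rw [Fintype.card_fin] at bound
  exact bound

end
end

section
/- Fix d ≥ 1 and a real number y > 0. Let G_y be the set of complex-valued Schwartz functions on ℝ^d of the form x ↦ exp(π i τ |x|²) for some τ ∈ ℂ with Im τ = y. Then every radial complex-valued Schwartz function on ℝ^d lies in the closure, in the Schwartz space topology, of the ℂ-linear span of G_y. In particular, the complex Gaussians x ↦ exp(π i τ |x|²) with Im τ = y span a dense subspace of the space of radial Schwartz functions. -/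
noncomputable section

/-- A function on `ℝ^d` is radial if its value depends only on the norm of the argument. -/
def IsRadial {d : ℕ} (f : EuclideanSpace ℝ (Fin d) → ℂ) : Prop :=
  ∀ x y : EuclideanSpace ℝ (Fin d), ‖x‖ = ‖y‖ → f x = f y

/-!
Let `f` be a radial Schwartz function. Cutting off its Fourier transform approximates `f` by
functions whose Fourier transform is radial with compact support; these have the form `p (‖x‖ ^ 2)`
with `p` smooth on the whole line, because `cos √z` is entire. A second cutoff makes `p` compactly
supported. Then `k t = p t * exp (π * y * t)` is smooth with compact support, and for every `N`
there are trigonometric polynomials `q` such that `k - q` and its first `N` derivatives are small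
relative to a fixed power of `1 + |t|`: approximate the `N`-th derivative uniformly by a Fourier
series and integrate `N` times. As `exp (-π * y * ‖x‖ ^ 2)` is a Schwartz function, its product with
`q (‖x‖ ^ 2)`, which lies in the span of the Gaussians, is then close to `p (‖x‖ ^ 2)`.
-/

open Complex Function
open scoped ContDiff FourierTransform Real RealInnerProductSpace SchwartzMap

section TemperateBound

variable {D E F : Type*} [NormedAddCommGroup D] [NormedSpace ℝ D] [NormedAddCommGroup E]
  [NormedSpace ℝ E] [NormedAddCommGroup F]

/-- Quantitative temperate growth: `w` is smooth and its derivatives of order at most `N` are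
bounded by `ε * (1 + ‖x‖) ^ m`. For fixed `N` and `m` the size of `w` as a multiplier of Schwartz
functions is measured by `ε`. -/
structure TemperateBound [NormedSpace ℝ F] (N m : ℕ) (ε : ℝ) (w : E → F) : Prop where
  contDiff : ContDiff ℝ ∞ w
  norm_iteratedFDeriv_le : ∀ i ≤ N, ∀ x, ‖iteratedFDeriv ℝ i w x‖ ≤ ε * (1 + ‖x‖) ^ m

namespace TemperateBound

variable [NormedSpace ℝ F] {N m : ℕ} {ε ε' : ℝ} {w w' : E → F}

theorem nonneg (h : TemperateBound N m ε w) : 0 ≤ ε := by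
  simpa using (norm_nonneg _).trans (h.norm_iteratedFDeriv_le 0 N.zero_le 0)

theorem mono {m' : ℕ} (h : TemperateBound N m ε w) (hm : m ≤ m') (hε : ε ≤ ε') :
    TemperateBound N m' ε' w where
  contDiff := h.contDiff
  norm_iteratedFDeriv_le i hi x := (h.norm_iteratedFDeriv_le i hi x).trans <|
    mul_le_mul hε (pow_le_pow_right₀ (by simp) hm) (by positivity) (h.nonneg.trans hε)

theorem zero (hε : 0 ≤ ε) : TemperateBound N m ε (0 : E → F) where
  contDiff := contDiff_const
  norm_iteratedFDeriv_le i _ x := by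
    rw [iteratedFDeriv_zero]
    simpa using by positivity

theorem add (h : TemperateBound N m ε w) (h' : TemperateBound N m ε' w') :
    TemperateBound N m (ε + ε') (w + w') where
  contDiff := h.contDiff.add h'.contDiff
  norm_iteratedFDeriv_le i hi x := by
    rw [iteratedFDeriv_add_apply (h.contDiff.of_le (mod_cast le_top)).contDiffAt
      (h'.contDiff.of_le (mod_cast le_top)).contDiffAt, add_mul]
    exact norm_add_le_of_le (h.norm_iteratedFDeriv_le i hi x) (h'.norm_iteratedFDeriv_le i hi x)

theorem const_smul {𝕜 : Type*} [NormedField 𝕜] [NormedSpace 𝕜 F] [SMulCommClass ℝ 𝕜 F] (c : 𝕜)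
    (h : TemperateBound N m ε w) : TemperateBound N m (‖c‖ * ε) (c • w) where
  contDiff := h.contDiff.const_smul c
  norm_iteratedFDeriv_le i hi x := by
    rw [iteratedFDeriv_const_smul_apply (h.contDiff.of_le (mod_cast le_top)).contDiffAt, norm_smul,
      mul_assoc]
    gcongr
    exact h.norm_iteratedFDeriv_le i hi x

theorem sub (h : TemperateBound N m ε w) (h' : TemperateBound N m ε' w') :
    TemperateBound N m (ε + ε') (w - w') := by
  simpa [sub_eq_add_neg] using h.add (h'.const_smul (-1 : ℝ))

theorem of_iteratedDeriv {w : ℝ → F} (hw : ContDiff ℝ ∞ w)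
    (h : ∀ i ≤ N, ∀ t, ‖iteratedDeriv i w t‖ ≤ ε * (1 + |t|) ^ m) : TemperateBound N m ε w where
  contDiff := hw
  norm_iteratedFDeriv_le i hi t := norm_iteratedFDeriv_eq_norm_iteratedDeriv.trans_le (h i hi t)

theorem norm_iteratedDeriv_le {w : ℝ → F} (h : TemperateBound N m ε w) {i : ℕ} (hi : i ≤ N)
    (t : ℝ) : ‖iteratedDeriv i w t‖ ≤ ε * (1 + |t|) ^ m :=
  norm_iteratedFDeriv_eq_norm_iteratedDeriv.symm.trans_le (h.norm_iteratedFDeriv_le i hi t)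

theorem of_deriv {w : ℝ → F} (hw : Differentiable ℝ w) (h0 : w 0 = 0)
    (h : TemperateBound N m ε (deriv w)) : TemperateBound (N + 1) (m + 1) ε w := by
  have hε := h.nonneg
  refine of_iteratedDeriv (contDiff_infty_iff_deriv.2 ⟨hw, h.contDiff⟩) fun i hi t ↦ ?_
  rw [pow_succ, ← mul_assoc]
  cases i with
  | zero =>
    have hderiv : ∀ s ∈ Metric.closedBall (0 : ℝ) |t|, ‖deriv w s‖ ≤ ε * (1 + |t|) ^ m := by
      intro s hs
      have hst : |s| ≤ |t| := by simpa using hs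
      refine (h.norm_iteratedDeriv_le N.zero_le s).trans ?_
      gcongr
    have := (convex_closedBall (0 : ℝ) |t|).norm_image_sub_le_of_norm_deriv_le
      (fun s _ ↦ hw s) hderiv (x := 0) (y := t) (by simp) (by simp)
    rw [h0, sub_zero, sub_zero, Real.norm_eq_abs] at this
    rw [iteratedDeriv_zero]
    refine this.trans ?_
    gcongr
    linarith
  | succ i =>
    rw [iteratedDeriv_succ']
    exact (h.norm_iteratedDeriv_le (by lia) t).trans
      (le_mul_of_one_le_right (by positivity) (by simp))

end TemperateBound

variable [NormedSpace ℝ F]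

theorem exists_norm_iteratedFDeriv_comp_le {φ : D → E} (hφ : φ.HasTemperateGrowth) (N : ℕ) :
    ∃ (l : ℕ) (C : ℝ), 0 ≤ C ∧ ∀ (w : E → F) (B : ℝ) (x : D), ContDiff ℝ ∞ w →
      (∀ i ≤ N, ‖iteratedFDeriv ℝ i w (φ x)‖ ≤ B) →
      ∀ n ≤ N, ‖iteratedFDeriv ℝ n (w ∘ φ) x‖ ≤ C * B * (1 + ‖x‖) ^ l := by
  obtain ⟨l, C, hC, hφ_le⟩ := hφ.norm_iteratedFDeriv_le_uniform N
  refine ⟨l * N, N.factorial * (C + 1) ^ N, by positivity, fun w B x hw hB n hn ↦ ?_⟩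
  have hB0 : 0 ≤ B := (norm_nonneg _).trans (hB 0 N.zero_le)
  have hone : 1 ≤ (C + 1) * (1 + ‖x‖) ^ l :=
    one_le_mul_of_one_le_of_one_le (by linarith) (one_le_pow₀ (by simp))
  have hφ_pow : ∀ j, 1 ≤ j → j ≤ n →
      ‖iteratedFDeriv ℝ j φ x‖ ≤ ((C + 1) * (1 + ‖x‖) ^ l) ^ j := fun j hj hjn ↦
    calc ‖iteratedFDeriv ℝ j φ x‖ ≤ C * (1 + ‖x‖) ^ l := hφ_le j (hjn.trans hn) x
      _ ≤ (C + 1) * (1 + ‖x‖) ^ l := by gcongr; linarith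
      _ ≤ _ := le_self_pow₀ hone (by lia)
  calc ‖iteratedFDeriv ℝ n (w ∘ φ) x‖
      ≤ n.factorial * B * ((C + 1) * (1 + ‖x‖) ^ l) ^ n :=
        norm_iteratedFDeriv_comp_le hw hφ.1 (mod_cast le_top) x
          (fun i hi ↦ hB i (hi.trans hn)) hφ_pow
    _ ≤ N.factorial * B * ((C + 1) * (1 + ‖x‖) ^ l) ^ N := by gcongr
    _ = N.factorial * (C + 1) ^ N * B * (1 + ‖x‖) ^ (l * N) := by rw [mul_pow, ← pow_mul]; ring

theorem exists_temperateBound_comp {φ : D → E} (hφ : φ.HasTemperateGrowth) (N m : ℕ) :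
    ∃ (l : ℕ) (C : ℝ), 0 < C ∧ ∀ (w : E → F) (ε : ℝ), TemperateBound N m ε w →
      TemperateBound N l (C * ε) (w ∘ φ) := by
  obtain ⟨l, C, hC, hcomp⟩ := exists_norm_iteratedFDeriv_comp_le (F := F) hφ N
  obtain ⟨l₀, C₀, hC₀, hφ_le⟩ := hφ.norm_iteratedFDeriv_le_uniform 0
  refine ⟨l₀ * m + l, (C + 1) * (C₀ + 1) ^ m, by positivity,
    fun w ε hw ↦ ⟨hw.contDiff.comp hφ.1, fun n hn x ↦ ?_⟩⟩
  have hε := hw.nonneg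
  have hφx : 1 + ‖φ x‖ ≤ (C₀ + 1) * (1 + ‖x‖) ^ l₀ := by
    have hφ_norm : ‖φ x‖ ≤ C₀ * (1 + ‖x‖) ^ l₀ := by simpa using hφ_le 0 le_rfl x
    have hone : 1 ≤ (1 + ‖x‖) ^ l₀ := one_le_pow₀ (by simp)
    linarith
  calc ‖iteratedFDeriv ℝ n (w ∘ φ) x‖
      ≤ C * (ε * (1 + ‖φ x‖) ^ m) * (1 + ‖x‖) ^ l :=
        hcomp w _ x hw.contDiff (fun i hi ↦ hw.norm_iteratedFDeriv_le i hi _) n hn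
    _ ≤ (C + 1) * (ε * ((C₀ + 1) * (1 + ‖x‖) ^ l₀) ^ m) * (1 + ‖x‖) ^ l := by gcongr; linarith
    _ = (C + 1) * (C₀ + 1) ^ m * ε * (1 + ‖x‖) ^ (l₀ * m + l) := by
        rw [mul_pow, ← pow_mul]; ring

end TemperateBound

section SchwartzClosure

variable {D E F : Type*} [NormedAddCommGroup D] [NormedSpace ℝ D] [NormedAddCommGroup E]
  [NormedSpace ℝ E] [NormedAddCommGroup F]

theorem exists_schwartzSeminorm_smul_le [NormedSpace ℂ F] (f : 𝓢(E, F)) (N m : ℕ) :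
    ∃ C : ℝ, 0 < C ∧ ∀ (w : E → ℂ) (ε : ℝ) (g : 𝓢(E, F)), TemperateBound N m ε w →
      (∀ x, g x = w x • f x) →
      ∀ k ≤ N, ∀ n ≤ N, SchwartzMap.seminorm ℝ k n g ≤ C * ε := by
  set Q : ℝ := 2 ^ (N + m) *
    ((Finset.Iic (N + m, N)).sup fun p ↦ SchwartzMap.seminorm ℝ p.1 p.2) f
  refine ⟨2 ^ N * (Q + 1), by positivity, fun w ε g hw hg k hk n hn ↦ ?_⟩
  have hε := hw.nonneg
  refine SchwartzMap.seminorm_le_bound ℝ k n g (by positivity) fun x ↦ ?_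
  have hleibniz : ∀ i ∈ Finset.range (n + 1),
      ‖x‖ ^ k * (n.choose i * ‖iteratedFDeriv ℝ i w x‖ * ‖iteratedFDeriv ℝ (n - i) f x‖) ≤
        n.choose i * ((Q + 1) * ε) := by
    intro i hi
    have hf : (1 + ‖x‖) ^ (N + m) * ‖iteratedFDeriv ℝ (n - i) f x‖ ≤ Q :=
      SchwartzMap.one_add_le_sup_seminorm_apply (𝕜 := ℝ) (m := (N + m, N)) le_rfl
        (show n - i ≤ N by lia) f x
    have hxk : ‖x‖ ^ k ≤ (1 + ‖x‖) ^ N :=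
      (pow_le_pow_left₀ (norm_nonneg x) (by linarith) k).trans (pow_le_pow_right₀ (by simp) hk)
    have hwi := hw.norm_iteratedFDeriv_le i (by grind) x
    calc ‖x‖ ^ k * (n.choose i * ‖iteratedFDeriv ℝ i w x‖ * ‖iteratedFDeriv ℝ (n - i) f x‖)
        ≤ (1 + ‖x‖) ^ N * (n.choose i * (ε * (1 + ‖x‖) ^ m) *
            ‖iteratedFDeriv ℝ (n - i) f x‖) := by gcongr
      _ = n.choose i * (((1 + ‖x‖) ^ (N + m) * ‖iteratedFDeriv ℝ (n - i) f x‖) * ε) := by ring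
      _ ≤ n.choose i * ((Q + 1) * ε) := by gcongr; linarith
  rw [show (g : E → F) = fun x ↦ w x • f x from funext hg]
  calc ‖x‖ ^ k * ‖iteratedFDeriv ℝ n (fun x ↦ w x • f x) x‖
      ≤ ‖x‖ ^ k * ∑ i ∈ Finset.range (n + 1),
          n.choose i * ‖iteratedFDeriv ℝ i w x‖ * ‖iteratedFDeriv ℝ (n - i) f x‖ := by
        gcongr
        exact norm_iteratedFDeriv_smul_le hw.contDiff (f.smooth ⊤) x (mod_cast le_top)
    _ ≤ ∑ i ∈ Finset.range (n + 1), n.choose i * ((Q + 1) * ε) := by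
        rw [Finset.mul_sum]
        exact Finset.sum_le_sum hleibniz
    _ = 2 ^ n * (Q + 1) * ε := by
        rw [← Finset.sum_mul, ← Nat.cast_sum, Nat.sum_range_choose]
        push_cast
        ring
    _ ≤ 2 ^ N * (Q + 1) * ε := by gcongr; norm_num

theorem mem_closure_of_schwartzSeminorm_sub_le [NormedSpace ℝ F] {S : Set 𝓢(E, F)} {f : 𝓢(E, F)}
    (h : ∀ (N : ℕ) (ε : ℝ), 0 < ε → ∃ g ∈ S, ∀ k ≤ N, ∀ n ≤ N,
      SchwartzMap.seminorm ℝ k n (f - g) ≤ ε) : f ∈ closure S := by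
  rw [mem_closure_iff_nhds]
  intro t ht
  obtain ⟨s, r, hr, hball⟩ := (schwartz_withSeminorms ℝ E F).mem_nhds_iff f t |>.1 ht
  obtain ⟨g, hgS, hg⟩ := h (s.sup fun p ↦ p.1 + p.2) (r / 2) (by positivity)
  refine ⟨g, hball ?_, hgS⟩
  rw [Seminorm.mem_ball, map_sub_rev]
  refine (Seminorm.finset_sup_apply_le (by positivity) fun p hp ↦ ?_).trans_lt (half_lt_self hr)
  have hps : p.1 + p.2 ≤ s.sup fun p ↦ p.1 + p.2 := Finset.le_sup (f := fun p ↦ p.1 + p.2) hp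
  exact hg p.1 (by lia) p.2 (by lia)

theorem mem_closure_of_temperateBound_smul [NormedSpace ℂ F] {S : Set 𝓢(E, F)} {f : 𝓢(E, F)}
    {φ : E → D} (hφ : φ.HasTemperateGrowth) (u : 𝓢(E, F))
    (h : ∀ N, ∃ m, ∀ ε > 0, ∃ w : D → ℂ, TemperateBound N m ε w ∧
      ∃ g ∈ S, ∀ x, (f - g) x = w (φ x) • u x) : f ∈ closure S := by
  refine mem_closure_of_schwartzSeminorm_sub_le fun N ε hε ↦ ?_
  obtain ⟨m, hm⟩ := h N
  obtain ⟨l, C, hC, hcomp⟩ := exists_temperateBound_comp (F := ℂ) hφ N m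
  obtain ⟨C', hC', hsmul⟩ := exists_schwartzSeminorm_smul_le u N l
  obtain ⟨w, hw, g, hgS, hg⟩ := hm (ε / (C' * C)) (by positivity)
  refine ⟨g, hgS, fun k hk n hn ↦ ?_⟩
  calc SchwartzMap.seminorm ℝ k n (f - g) ≤ C' * (C * (ε / (C' * C))) :=
        hsmul _ _ _ (hcomp w _ hw) hg k hk n hn
    _ = ε := by field_simp

end SchwartzClosure

section Cutoff

variable {F : Type*} [NormedAddCommGroup F] [NormedSpace ℝ F]

theorem exists_temperateBound_of_hasCompactSupport {w : ℝ → F} (hw : ContDiff ℝ ∞ w)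
    (hc : HasCompactSupport w) (N : ℕ) : ∃ C : ℝ, 0 < C ∧ TemperateBound N 0 C w := by
  have hbdd : ∀ i : ℕ, ∃ B : ℝ, ∀ t, ‖iteratedFDeriv ℝ i w t‖ ≤ B := fun i ↦
    (hc.iteratedFDeriv i).exists_bound_of_continuous
      (hw.continuous_iteratedFDeriv (mod_cast le_top))
  choose B hB using hbdd
  have hB0 : ∀ i, 0 ≤ B i := fun i ↦ (norm_nonneg _).trans (hB i 0)
  have hsum : 0 ≤ ∑ j ∈ Finset.range (N + 1), B j := Finset.sum_nonneg fun j _ ↦ hB0 j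
  refine ⟨∑ j ∈ Finset.range (N + 1), B j + 1, by positivity, hw, fun i hi t ↦ ?_⟩
  have hiN : B i ≤ ∑ j ∈ Finset.range (N + 1), B j :=
    Finset.single_le_sum (fun j _ ↦ hB0 j) (by grind)
  rw [pow_zero, mul_one]
  linarith [hB i t]

theorem exists_temperateBound_sub_comp_mul {χ : ℝ → F} (hχ : ContDiff ℝ ∞ χ)
    (hc : HasCompactSupport χ) (N : ℕ) :
    ∃ C : ℝ, 0 < C ∧ ∀ δ : ℝ, 0 < δ → δ ≤ 1 →
      TemperateBound N 1 (δ * C) fun t ↦ χ 0 - χ (δ * t) := by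
  obtain ⟨C, hC, hbound⟩ := exists_temperateBound_of_hasCompactSupport hχ hc (N + 1)
  refine ⟨C, hC, fun δ hδ hδ1 ↦ ?_⟩
  have hsmooth : ContDiff ℝ ∞ fun t ↦ χ 0 - χ (δ * t) := by fun_prop
  have hderiv : TemperateBound N 0 (δ * C) (deriv fun t ↦ χ 0 - χ (δ * t)) := by
    refine .of_iteratedDeriv (contDiff_infty_iff_deriv.1 hsmooth).2 fun i hi t ↦ ?_
    have hiter : iteratedDeriv i (deriv fun t ↦ χ 0 - χ (δ * t)) t =
        -(δ ^ (i + 1) • iteratedDeriv (i + 1) χ (δ * t)) := by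
      rw [← iteratedDeriv_succ', iteratedDeriv_const_sub i.succ_pos, iteratedDeriv_neg,
        iteratedDeriv_comp_const_smul (hχ.of_le (mod_cast le_top))]
    rw [hiter, norm_neg, norm_smul, Real.norm_of_nonneg (by positivity), pow_zero, mul_one]
    gcongr
    · exact pow_le_of_le_one hδ.le hδ1 i.succ_ne_zero
    · simpa using hbound.norm_iteratedDeriv_le (Nat.succ_le_succ hi) (δ * t)
  have h := TemperateBound.of_deriv (hsmooth.differentiable (by simp)) (by simp) hderiv
  exact ⟨h.contDiff, fun i hi ↦ h.norm_iteratedFDeriv_le i (by lia)⟩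

theorem mem_closure_hasCompactSupport_comp_smul {E F : Type*} [NormedAddCommGroup E]
    [NormedSpace ℝ E] [NormedAddCommGroup F] [NormedSpace ℂ F] {φ : E → ℝ}
    (hφ : φ.HasTemperateGrowth) (f : 𝓢(E, F)) :
    f ∈ closure {g : 𝓢(E, F) | ∃ χ : ℝ → ℂ, ContDiff ℝ ∞ χ ∧ HasCompactSupport χ ∧
      ∀ x, g x = χ (φ x) • f x} := by
  let b : ContDiffBump (0 : ℝ) := ⟨1, 2, one_pos, one_lt_two⟩
  let χ : ℝ → ℂ := fun t ↦ b t
  have hχ : ContDiff ℝ ∞ χ := ofRealCLM.contDiff.comp b.contDiff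
  have hc : HasCompactSupport χ := b.hasCompactSupport.comp_left ofReal_zero
  have hχ0 : χ 0 = 1 := by
    simpa [χ] using b.one_of_mem_closedBall (Metric.mem_closedBall_self b.rIn_pos.le)
  refine mem_closure_of_temperateBound_smul hφ f fun N ↦ ⟨1, fun ε hε ↦ ?_⟩
  obtain ⟨C, hC, hbound⟩ := exists_temperateBound_sub_comp_mul hχ hc N
  set δ := min 1 (ε / C)
  have hδ : 0 < δ := by positivity
  have hδC : δ * C ≤ ε := (le_div_iff₀ hC).1 (min_le_right _ _)
  have hχδ : ContDiff ℝ ∞ fun t ↦ χ (δ * t) := by fun_prop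
  have hcδ : HasCompactSupport fun t ↦ χ (δ * t) :=
    hc.comp_homeomorph (Homeomorph.mulLeft₀ δ hδ.ne')
  have hgrowth : ((fun t ↦ χ (δ * t)) ∘ φ).HasTemperateGrowth :=
    (hcδ.hasTemperateGrowth hχδ).comp hφ
  refine ⟨_, (hbound δ hδ (min_le_left _ _)).mono le_rfl hδC,
    SchwartzMap.smulLeftCLM F ((fun t ↦ χ (δ * t)) ∘ φ) f,
    ⟨_, hχδ, hcδ, SchwartzMap.smulLeftCLM_apply_apply hgrowth f⟩, fun x ↦ ?_⟩
  rw [sub_apply, SchwartzMap.smulLeftCLM_apply_apply hgrowth, hχ0, sub_smul, one_smul]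
  rfl

end Cutoff

section Trigonometric

theorem iteratedDeriv_cexp_const_mul_ofReal (n : ℕ) (a : ℂ) :
    iteratedDeriv n (fun t : ℝ ↦ cexp (a * t)) = fun t : ℝ ↦ a ^ n * cexp (a * t) := by
  induction n with
  | zero => simp
  | succ n ih =>
    funext t
    have h : HasDerivAt (fun t : ℝ ↦ cexp (a * t)) (cexp (a * t) * (a * 1)) t :=
      ((ofRealCLM.hasDerivAt (x := t)).const_mul a).cexp
    rw [iteratedDeriv_succ, ih, (h.const_mul (a ^ n)).deriv]
    ring

theorem contDiff_cexp_const_mul_ofReal (a : ℂ) : ContDiff ℝ ∞ fun t : ℝ ↦ cexp (a * t) :=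
  (contDiff_const.mul ofRealCLM.contDiff).cexp

/-- The exponential `t ↦ exp (π i s t)`. Its frequency is `s / 2`, so that multiplying a Gaussian
by `trigMonomial s (‖x‖ ^ 2)` adds `s` to the parameter `τ` of the Gaussian. -/
def trigMonomial (s : ℝ) : ℝ → ℂ := fun t ↦ cexp (π * I * s * t)

/-- Trigonometric polynomials on the line, with arbitrary real frequencies. -/
def trigPoly : Submodule ℂ (ℝ → ℂ) := Submodule.span ℂ (Set.range trigMonomial)

theorem trigMonomial_mem_trigPoly (s : ℝ) : trigMonomial s ∈ trigPoly :=
  Submodule.subset_span ⟨s, rfl⟩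

theorem const_mem_trigPoly (c : ℂ) : (fun _ ↦ c) ∈ trigPoly := by
  have hconst : (fun _ ↦ c) = c • trigMonomial 0 := by funext t; simp [trigMonomial]
  exact hconst ▸ trigPoly.smul_mem c (trigMonomial_mem_trigPoly 0)

theorem contDiff_trigMonomial (s : ℝ) : ContDiff ℝ ∞ (trigMonomial s) :=
  contDiff_cexp_const_mul_ofReal _

theorem norm_trigMonomial (s t : ℝ) : ‖trigMonomial s t‖ = 1 := by
  rw [trigMonomial, show (π * I * s * t : ℂ) = (π * s * t : ℝ) * I by push_cast; ring,
    norm_exp_ofReal_mul_I]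

theorem deriv_trigMonomial (s : ℝ) : deriv (trigMonomial s) = (π * I * s : ℂ) • trigMonomial s := by
  have h := iteratedDeriv_cexp_const_mul_ofReal 1 (π * I * s)
  simp only [iteratedDeriv_one, pow_one] at h
  exact h

theorem contDiff_of_mem_trigPoly {q : ℝ → ℂ} (hq : q ∈ trigPoly) : ContDiff ℝ ∞ q := by
  induction hq using Submodule.span_induction with
  | mem q hq => obtain ⟨s, rfl⟩ := hq; exact contDiff_trigMonomial s
  | zero => exact contDiff_const
  | add q r _ _ hq hr => exact hq.add hr
  | smul c q _ hq => exact hq.const_smul c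

theorem exists_trigPoly_norm_addCircle_sub_lt {T : ℝ} (hT : 0 < T) (f : C(AddCircle T, ℂ)) {ε : ℝ}
    (hε : 0 < ε) : ∃ q ∈ trigPoly, ∀ t : ℝ, ‖f t - q t‖ < ε := by
  have : Fact (0 < T) := ⟨hT⟩
  have hf : f ∈ closure (Submodule.span ℂ (Set.range (@fourier T)) : Set C(AddCircle T, ℂ)) := by
    rw [← Submodule.topologicalClosure_coe, span_fourier_closure_eq_top]
    trivial
  obtain ⟨p, hp, hfp⟩ := Metric.mem_closure_iff.1 hf ε hε
  refine ⟨fun t ↦ p t, ?_, fun t ↦ ?_⟩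
  · clear hfp
    induction hp using Submodule.span_induction with
    | mem p hp =>
      obtain ⟨n, rfl⟩ := hp
      convert trigMonomial_mem_trigPoly (2 * n / T) using 2 with t
      rw [fourier_coe_apply]
      congr 1
      push_cast
      ring
    | zero => exact trigPoly.zero_mem
    | add p r _ _ hp hr => exact trigPoly.add_mem hp hr
    | smul c p _ hp => exact trigPoly.smul_mem c hp
  · exact ((f - p).norm_coe_le_norm t).trans_lt (dist_eq_norm f p ▸ hfp)

theorem exists_continuousMap_addCircle_eqOn {k : ℝ → ℂ} {A B : ℝ} (hA : 0 < A) (hk : Continuous k)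
    (hk0 : ∀ t, A ≤ |t| → k t = 0) (hB : ∀ t, ‖k t‖ ≤ B) :
    ∃ f : C(AddCircle (2 * A), ℂ), (∀ t : ℝ, |t| < A → f t = k t) ∧ ∀ t, ‖f t‖ ≤ B := by
  have : Fact (0 < 2 * A) := ⟨by positivity⟩
  have hends : k (-A) = k (-A + 2 * A) := by
    rw [hk0 (-A) (by simp [le_abs_self]), hk0 (-A + 2 * A) (le_abs.2 (.inl (by linarith)))]
  refine ⟨⟨_, AddCircle.liftIco_continuous hends hk.continuousOn⟩, fun t ht ↦ ?_, fun t ↦ hB _⟩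
  rw [abs_lt] at ht
  exact AddCircle.liftIco_coe_apply ⟨ht.1.le, by linarith⟩

theorem exists_trigPoly_norm_sub_le_mul_one_add_abs {k : ℝ → ℂ} (hk : Continuous k)
    (hc : HasCompactSupport k) {ε : ℝ} (hε : 0 < ε) :
    ∃ q ∈ trigPoly, ∀ t, ‖k t - q t‖ ≤ ε * (1 + |t|) := by
  obtain ⟨B, hB⟩ := hc.exists_bound_of_continuous hk
  obtain ⟨R, hR⟩ := hc.isCompact.isBounded.subset_ball (0 : ℝ)
  set A : ℝ := max (max R 1) (B / ε)
  have hA : 0 < A := one_pos.trans_le ((le_max_right _ _).trans (le_max_left _ _))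
  have hBA : B ≤ ε * A := (div_le_iff₀' hε).1 (le_max_right _ _)
  have hk0 : ∀ t, A ≤ |t| → k t = 0 := fun t ht ↦ by
    refine image_eq_zero_of_notMem_tsupport fun hmem ↦ ?_
    have htR : |t| < R := by simpa using hR hmem
    exact (htR.trans_le ((le_max_left _ _).trans ((le_max_left _ _).trans ht))).false
  obtain ⟨f, hfk, hfB⟩ := exists_continuousMap_addCircle_eqOn hA hk hk0 hB
  obtain ⟨q, hq, hfq⟩ := exists_trigPoly_norm_addCircle_sub_lt (by positivity) f hε
  have hkf : ∀ t : ℝ, ‖k t - f t‖ ≤ ε * |t| := fun t ↦ by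
    rcases lt_or_ge |t| A with ht | ht
    · rw [hfk t ht, sub_self, norm_zero]
      positivity
    · rw [hk0 t ht, zero_sub, norm_neg]
      exact (hfB t).trans (hBA.trans (by gcongr))
  refine ⟨q, hq, fun t ↦ ?_⟩
  calc ‖k t - q t‖ ≤ ‖k t - f t‖ + ‖f t - q t‖ := norm_sub_le_norm_sub_add_norm_sub _ _ _
    _ ≤ ε * |t| + ε := add_le_add (hkf t) (hfq t).le
    _ = ε * (1 + |t|) := by ring

theorem temperateBound_trigMonomial_sub_one {s : ℝ} (hs : 0 ≤ s) (hs1 : π * s ≤ 1) (N : ℕ) :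
    TemperateBound N 1 (π * s) (trigMonomial s - 1) := by
  have hderiv : deriv (trigMonomial s - 1) = (π * I * s : ℂ) • trigMonomial s := by
    rw [← deriv_trigMonomial]
    funext t
    exact deriv_sub_const 1
  have hdiff : Differentiable ℝ (trigMonomial s - 1) :=
    ((contDiff_trigMonomial s).sub contDiff_const).differentiable (by simp)
  have hnorm : ‖(π * I * s : ℂ)‖ = π * s := by
    simp [abs_of_nonneg hs, abs_of_pos Real.pi_pos]
  have hbound : TemperateBound N 0 1 (trigMonomial s) := by
    refine .of_iteratedDeriv (contDiff_trigMonomial s) fun i _ t ↦ ?_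
    have hiter : iteratedDeriv i (trigMonomial s) t = (π * I * s) ^ i * trigMonomial s t :=
      congrFun (iteratedDeriv_cexp_const_mul_ofReal i (π * I * s)) t
    rw [hiter, norm_mul, norm_pow, hnorm, norm_trigMonomial]
    simpa using pow_le_one₀ (by positivity) hs1
  have h := TemperateBound.of_deriv hdiff (by simp [trigMonomial])
    (hderiv ▸ hbound.const_smul (π * I * s : ℂ))
  rw [hnorm, mul_one] at h
  exact ⟨h.contDiff, fun i hi ↦ h.norm_iteratedFDeriv_le i (by lia)⟩

theorem exists_ne_zero_temperateBound_trigMonomial_sub (s : ℝ) (N : ℕ) {ε : ℝ} (hε : 0 < ε) :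
    ∃ r ≠ 0, TemperateBound N 1 ε (trigMonomial r - trigMonomial s) := by
  rcases ne_or_eq s 0 with hs | rfl
  · exact ⟨s, hs, sub_self (trigMonomial s) ▸ .zero hε.le⟩
  · have hr : 0 < min 1 ε / π := by positivity
    have hπr : π * (min 1 ε / π) = min 1 ε := mul_div_cancel₀ _ Real.pi_ne_zero
    have hone : trigMonomial 0 = 1 := by funext t; simp [trigMonomial]
    refine ⟨min 1 ε / π, hr.ne', ?_⟩
    rw [hone]
    exact (temperateBound_trigMonomial_sub_one hr.le (hπr.trans_le (min_le_left _ _)) N).mono le_rfl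
      (hπr.trans_le (min_le_right _ _))

/- The primitive of a trigonometric polynomial need not be one, because of the frequency zero.
Moving that frequency slightly away from zero makes the integration possible. -/
theorem exists_trigPoly_temperateBound_deriv_sub {q : ℝ → ℂ} (hq : q ∈ trigPoly) (N : ℕ) {ε : ℝ}
    (hε : 0 < ε) : ∃ p ∈ trigPoly, TemperateBound N 1 ε (deriv p - q) := by
  induction hq using Submodule.span_induction generalizing ε with
  | mem q hq =>
    obtain ⟨s, rfl⟩ := hq
    obtain ⟨r, hr, hrs⟩ := exists_ne_zero_temperateBound_trigMonomial_sub s N hε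
    refine ⟨(π * I * r : ℂ)⁻¹ • trigMonomial r,
      trigPoly.smul_mem _ (trigMonomial_mem_trigPoly r), ?_⟩
    have hne : (π * I * r : ℂ) ≠ 0 := by simp [hr, Real.pi_ne_zero]
    have hderiv : deriv ((π * I * r : ℂ)⁻¹ • trigMonomial r) = trigMonomial r := by
      funext t
      rw [deriv_const_smul_field, deriv_trigMonomial, Pi.smul_apply, inv_smul_smul₀ hne]
    rwa [hderiv]
  | zero => exact ⟨0, trigPoly.zero_mem, by simpa using TemperateBound.zero hε.le⟩
  | add q₁ q₂ _ _ h₁ h₂ =>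
    obtain ⟨p₁, hp₁, hb₁⟩ := h₁ (half_pos hε)
    obtain ⟨p₂, hp₂, hb₂⟩ := h₂ (half_pos hε)
    refine ⟨p₁ + p₂, trigPoly.add_mem hp₁ hp₂, ?_⟩
    have hderiv : deriv (p₁ + p₂) = deriv p₁ + deriv p₂ := funext fun t ↦
      deriv_add ((contDiff_of_mem_trigPoly hp₁).differentiable (by simp) t)
        ((contDiff_of_mem_trigPoly hp₂).differentiable (by simp) t)
    rw [hderiv, add_sub_add_comm, ← add_halves ε]
    exact hb₁.add hb₂
  | smul c q _ h =>
    obtain ⟨p, hp, hb⟩ := h (ε := ε / (‖c‖ + 1)) (by positivity)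
    refine ⟨c • p, trigPoly.smul_mem c hp, ?_⟩
    have hderiv : deriv (c • p) = c • deriv p := funext fun _ ↦ deriv_const_smul_field c p
    rw [hderiv, ← smul_sub]
    refine (hb.const_smul c).mono le_rfl ?_
    rw [mul_div_assoc', div_le_iff₀ (by positivity)]
    linarith

theorem exists_trigPoly_temperateBound_sub (N : ℕ) {k : ℝ → ℂ} (hk : ContDiff ℝ ∞ k)
    (hc : HasCompactSupport k) {ε : ℝ} (hε : 0 < ε) :
    ∃ q ∈ trigPoly, TemperateBound N (N + 1) ε (k - q) := by
  induction N generalizing k ε with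
  | zero =>
    obtain ⟨q, hq, hkq⟩ := exists_trigPoly_norm_sub_le_mul_one_add_abs hk.continuous hc hε
    refine ⟨q, hq, .of_iteratedDeriv (hk.sub (contDiff_of_mem_trigPoly hq)) fun i hi t ↦ ?_⟩
    obtain rfl : i = 0 := by lia
    simpa using hkq t
  | succ N ih =>
    have hkd := contDiff_infty_iff_deriv.1 hk
    obtain ⟨q, hq, hkq⟩ := ih hkd.2 hc.deriv (half_pos hε)
    obtain ⟨p, hp, hpq⟩ := exists_trigPoly_temperateBound_deriv_sub hq N (half_pos hε)
    have hpd : Differentiable ℝ p := (contDiff_of_mem_trigPoly hp).differentiable (by simp)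
    set c : ℂ := k 0 - p 0
    have hderiv : deriv (k - (p + fun _ ↦ c)) = (deriv k - q) - (deriv p - q) := by
      funext t
      have : deriv (k - (p + fun _ ↦ c)) t = deriv k t - deriv p t :=
        ((hkd.1 t).hasDerivAt.sub ((hpd t).hasDerivAt.add_const c)).deriv
      simp [this]
    refine ⟨p + fun _ ↦ c, trigPoly.add_mem hp (const_mem_trigPoly c), .of_deriv ?_ ?_ ?_⟩
    · exact hkd.1.sub (hpd.add (differentiable_const c))
    · simp [c]
    · rw [hderiv, ← add_halves ε]
      exact hkq.sub (hpq.mono (by lia) le_rfl)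

end Trigonometric

section Gaussian

variable {E : Type*} [NormedAddCommGroup E] [InnerProductSpace ℝ E]

theorem one_add_pow_mul_exp_neg_mul_sq_le {c r : ℝ} (hc : 0 < c) (hr : 0 ≤ r) (n : ℕ) :
    (1 + r) ^ n * rexp (-c * r ^ 2) ≤ n.factorial * rexp (1 + 1 / (4 * c)) := by
  have hpow : (1 + r) ^ n ≤ n.factorial * rexp (1 + r) :=
    (div_le_iff₀' (by positivity)).1 (Real.pow_div_factorial_le_exp (1 + r) (by positivity) n)
  have hsq : 1 / (4 * c) - (r - c * r ^ 2) = c * (r - 1 / (2 * c)) ^ 2 := by field_simp; ring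
  have hsq_nonneg : 0 ≤ c * (r - 1 / (2 * c)) ^ 2 := by positivity
  have hexp : 1 + r + -c * r ^ 2 ≤ 1 + 1 / (4 * c) := by linarith
  calc (1 + r) ^ n * rexp (-c * r ^ 2)
      ≤ n.factorial * rexp (1 + r) * rexp (-c * r ^ 2) := by gcongr
    _ = n.factorial * rexp (1 + r + -c * r ^ 2) := by rw [mul_assoc, ← Real.exp_add]
    _ ≤ n.factorial * rexp (1 + 1 / (4 * c)) := by gcongr

theorem exists_pow_mul_norm_iteratedFDeriv_cexp_mul_norm_sq_le {a : ℂ} (ha : a.re < 0)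
    (k n : ℕ) : ∃ C : ℝ, ∀ x : E,
      ‖x‖ ^ k * ‖iteratedFDeriv ℝ n (fun x : E ↦ cexp (a * (‖x‖ : ℂ) ^ 2)) x‖ ≤ C := by
  obtain ⟨l, C, hC, hcomp⟩ :=
    exists_norm_iteratedFDeriv_comp_le (F := ℂ) (hasTemperateGrowth_norm_sq E) n
  set A : ℝ := (1 + ‖a‖) ^ n
  refine ⟨C * A * ((k + l).factorial * rexp (1 + 1 / (4 * -a.re))), fun x ↦ ?_⟩
  have houter : ∀ i ≤ n, ‖iteratedFDeriv ℝ i (fun t : ℝ ↦ cexp (a * t)) (‖x‖ ^ 2)‖ ≤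
      A * rexp (a.re * ‖x‖ ^ 2) := fun i hi ↦ by
    rw [norm_iteratedFDeriv_eq_norm_iteratedDeriv, iteratedDeriv_cexp_const_mul_ofReal, norm_mul,
      norm_pow, norm_exp, re_mul_ofReal]
    gcongr
    calc ‖a‖ ^ i ≤ (1 + ‖a‖) ^ i := by gcongr; linarith
      _ ≤ A := pow_le_pow_right₀ (by simp) hi
  have hx := hcomp _ _ x (contDiff_cexp_const_mul_ofReal a) houter n le_rfl
  rw [show (fun t : ℝ ↦ cexp (a * t)) ∘ (fun x : E ↦ ‖x‖ ^ 2) =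
    fun x ↦ cexp (a * (‖x‖ : ℂ) ^ 2) by funext x; simp] at hx
  have hxk : ‖x‖ ^ k ≤ (1 + ‖x‖) ^ k := by gcongr; linarith
  calc ‖x‖ ^ k * ‖iteratedFDeriv ℝ n (fun x : E ↦ cexp (a * (‖x‖ : ℂ) ^ 2)) x‖
      ≤ (1 + ‖x‖) ^ k * (C * (A * rexp (a.re * ‖x‖ ^ 2)) * (1 + ‖x‖) ^ l) := by gcongr
    _ = C * A * ((1 + ‖x‖) ^ (k + l) * rexp (-(-a.re) * ‖x‖ ^ 2)) := by rw [neg_neg]; ring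
    _ ≤ _ := by
      refine mul_le_mul_of_nonneg_left ?_ (by positivity)
      exact one_add_pow_mul_exp_neg_mul_sq_le (neg_pos.2 ha) (norm_nonneg x) _

/-- The complex Gaussian `x ↦ exp (π i τ ‖x‖ ^ 2)` as a Schwartz function. -/
def schwartzGaussian (E : Type*) [NormedAddCommGroup E] [InnerProductSpace ℝ E] (τ : ℂ)
    (hτ : 0 < τ.im) : 𝓢(E, ℂ) where
  toFun x := cexp (π * I * τ * (‖x‖ : ℂ) ^ 2)
  smooth' := by
    have hsq : ContDiff ℝ ∞ fun x : E ↦ (‖x‖ : ℂ) ^ 2 := by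
      simpa [comp_def] using ofRealCLM.contDiff.comp (contDiff_norm_sq ℝ (E := E) (n := ∞))
    exact (contDiff_const.mul hsq).cexp
  decay' := exists_pow_mul_norm_iteratedFDeriv_cexp_mul_norm_sq_le (by simpa [Real.pi_pos] using hτ)

theorem schwartzGaussian_apply {τ : ℂ} (hτ : 0 < τ.im) (x : E) :
    schwartzGaussian E τ hτ x = cexp (π * I * τ * (‖x‖ : ℂ) ^ 2) := rfl

/-- The complex Gaussians with parameter on the horizontal line `Im τ = y`, as a set of Schwartz
functions. -/
def gaussianSet (E : Type*) [NormedAddCommGroup E] [InnerProductSpace ℝ E] (y : ℝ) :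
    Set 𝓢(E, ℂ) :=
  {g | ∃ τ : ℂ, τ.im = y ∧ ∀ x : E, g x = cexp (π * I * τ * (‖x‖ : ℂ) ^ 2)}

theorem exists_mem_span_gaussianSet_eq_trigPoly_mul {τ : ℂ} (hτ : 0 < τ.im) {q : ℝ → ℂ}
    (hq : q ∈ trigPoly) : ∃ g ∈ Submodule.span ℂ (gaussianSet E τ.im),
      ∀ x, g x = q (‖x‖ ^ 2) * schwartzGaussian E τ hτ x := by
  induction hq using Submodule.span_induction with
  | mem q hq =>
    obtain ⟨s, rfl⟩ := hq
    have him : (s + τ).im = τ.im := by simp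
    refine ⟨schwartzGaussian E (s + τ) (by rwa [him]),
      Submodule.subset_span ⟨s + τ, him, fun _ ↦ rfl⟩, fun x ↦ ?_⟩
    rw [schwartzGaussian_apply, schwartzGaussian_apply, trigMonomial, ← Complex.exp_add]
    congr 1
    push_cast
    ring
  | zero => exact ⟨0, Submodule.zero_mem _, by simp⟩
  | add q₁ q₂ _ _ h₁ h₂ =>
    obtain ⟨g₁, hg₁, hq₁⟩ := h₁
    obtain ⟨g₂, hg₂, hq₂⟩ := h₂
    exact ⟨g₁ + g₂, Submodule.add_mem _ hg₁ hg₂, fun x ↦ by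
      rw [add_apply, hq₁, hq₂, Pi.add_apply, add_mul]⟩
  | smul c q _ h =>
    obtain ⟨g, hg, hgq⟩ := h
    exact ⟨c • g, Submodule.smul_mem _ c hg, fun x ↦ by
      rw [smul_apply, hgq, Pi.smul_apply, smul_mul_assoc]⟩

theorem mem_closure_span_gaussianSet_of_hasCompactSupport {y : ℝ} (hy : 0 < y) {f : 𝓢(E, ℂ)}
    {k : ℝ → ℂ} (hk : ContDiff ℝ ∞ k) (hc : HasCompactSupport k) (hf : ∀ x, f x = k (‖x‖ ^ 2)) :
    f ∈ closure (Submodule.span ℂ (gaussianSet E y) : Set 𝓢(E, ℂ)) := by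
  obtain ⟨τ, rfl⟩ : ∃ τ : ℂ, τ.im = y := ⟨y * I, by simp⟩
  refine mem_closure_of_temperateBound_smul (hasTemperateGrowth_norm_sq E)
    (schwartzGaussian E τ hy) fun N ↦ ⟨N + 1, fun ε hε ↦ ?_⟩
  have hk' : ContDiff ℝ ∞ fun t ↦ k t * cexp (-(π * I * τ) * t) :=
    hk.mul (contDiff_cexp_const_mul_ofReal _)
  obtain ⟨q, hq, hkq⟩ := exists_trigPoly_temperateBound_sub N hk' hc.mul_right hε
  obtain ⟨g, hg, hgq⟩ := exists_mem_span_gaussianSet_eq_trigPoly_mul (E := E) hy hq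
  refine ⟨_, hkq, g, hg, fun x ↦ ?_⟩
  have hcancel :
      cexp (-(π * I * τ) * (‖x‖ ^ 2 : ℝ)) * schwartzGaussian E τ hy x = 1 := by
    rw [schwartzGaussian_apply, ← Complex.exp_add, ← Complex.exp_zero]
    congr 1
    push_cast
    ring
  rw [sub_apply, hf, hgq, Pi.sub_apply, smul_eq_mul, sub_mul, mul_assoc, hcancel, mul_one]

theorem mem_closure_span_gaussianSet_of_contDiff {y : ℝ} (hy : 0 < y) {f : 𝓢(E, ℂ)}
    {p : ℝ → ℂ} (hp : ContDiff ℝ ∞ p) (hf : ∀ x, f x = p (‖x‖ ^ 2)) :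
    f ∈ closure (Submodule.span ℂ (gaussianSet E y) : Set 𝓢(E, ℂ)) := by
  refine closure_minimal ?_ isClosed_closure
    (mem_closure_hasCompactSupport_comp_smul (hasTemperateGrowth_norm_sq E) f)
  rintro g ⟨χ, hχ, hc, hg⟩
  exact mem_closure_span_gaussianSet_of_hasCompactSupport hy (hχ.mul hp) hc.mul_right
    fun x ↦ by rw [hg, hf, smul_eq_mul]

end Gaussian

section CosSqrt

/-- The entire function `cos √z`, defined by its power series. -/
def cosSqrt (z : ℂ) : ℂ := ∑' n : ℕ, (-1) ^ n * z ^ n / ((2 * n).factorial : ℂ)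

theorem differentiable_cosSqrt : Differentiable ℂ cosSqrt := fun z ↦ by
  have hterm : ∀ (n : ℕ), ∀ w ∈ Metric.ball (0 : ℂ) (‖z‖ + 1),
      ‖(-1) ^ n * w ^ n / ((2 * n).factorial : ℂ)‖ ≤ (‖z‖ + 1) ^ n / n.factorial := by
    intro n w hw
    rw [mem_ball_zero_iff] at hw
    rw [norm_div, norm_mul, norm_pow, norm_pow, norm_neg, norm_one, one_pow, one_mul, norm_natCast]
    gcongr
    lia
  exact (differentiableOn_tsum_of_summable_norm (Real.summable_pow_div_factorial (‖z‖ + 1))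
    (fun n ↦ by fun_prop) Metric.isOpen_ball hterm).differentiableAt
    (Metric.isOpen_ball.mem_nhds (by simp))

theorem cosSqrt_sq (w : ℂ) : cosSqrt (w ^ 2) = Complex.cos w := by
  simp only [cosSqrt, cos_eq_tsum, ← pow_mul]

end CosSqrt

section Fourier

open MeasureTheory

theorem differentiable_integral_smul_of_hasCompactSupport {𝕜 X F : Type*} [RCLike 𝕜]
    [TopologicalSpace X] [MeasurableSpace X] [OpensMeasurableSpace X] {μ : Measure X}
    [IsFiniteMeasureOnCompacts μ] [NormedAddCommGroup F] [NormedSpace ℝ F] [NormedSpace 𝕜 F]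
    {K : 𝕜 → X → 𝕜} {q : X → F} (hK : ∀ z, Continuous (K z))
    (hdiff : ∀ x, Differentiable 𝕜 fun z ↦ K z x)
    (hderiv : Continuous fun p : 𝕜 × X ↦ deriv (fun z ↦ K z p.2) p.1)
    (hq : Continuous q) (hc : HasCompactSupport q) :
    Differentiable 𝕜 fun z ↦ ∫ x, K z x • q x ∂μ := by
  intro z₀
  have hint : ∀ {a : X → 𝕜}, Continuous a → Integrable (fun x ↦ a x • q x) μ := fun ha ↦
    (ha.smul hq).integrable_of_hasCompactSupport hc.smul_left
  let K' : 𝕜 → X → F := fun z x ↦ deriv (fun z ↦ K z x) z • q x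
  have hK' : Continuous fun p : 𝕜 × X ↦ K' p.1 p.2 := hderiv.smul (hq.comp continuous_snd)
  obtain ⟨B, hB⟩ := ((isCompact_closedBall z₀ 1).prod hc.isCompact).exists_bound_of_continuousOn
    hK'.continuousOn
  have hbound : ∀ x, ∀ z ∈ Metric.closedBall z₀ 1,
      ‖K' z x‖ ≤ (tsupport q).indicator (fun _ ↦ B) x := fun x z hz ↦ by
    by_cases hx : x ∈ tsupport q
    · rw [Set.indicator_of_mem hx]
      exact hB (z, x) ⟨hz, hx⟩
    · rw [Set.indicator_of_notMem hx]
      simp [K', image_eq_zero_of_notMem_tsupport hx]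
  have hbound_int : Integrable ((tsupport q).indicator fun _ ↦ B) μ :=
    (integrable_indicator_iff (isClosed_tsupport q).measurableSet).2
      (integrableOn_const hc.isCompact.measure_lt_top.ne)
  exact (hasDerivAt_integral_of_dominated_loc_of_deriv_le (F' := K')
    (Metric.closedBall_mem_nhds z₀ one_pos)
    (.of_forall fun z ↦ (hint (hK z)).aestronglyMeasurable) (hint (hK z₀))
    (hint (hderiv.comp (.prodMk_right z₀))).aestronglyMeasurable (.of_forall hbound) hbound_int
    (.of_forall fun x z _ ↦ (hdiff x z).hasDerivAt.smul_const (q x))).2.differentiableAt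

variable {E F : Type*} [NormedAddCommGroup E] [InnerProductSpace ℝ E] [FiniteDimensional ℝ E]
  [MeasurableSpace E] [BorelSpace E] [NormedAddCommGroup F] [NormedSpace ℂ F] {q : E → F}

theorem factorsThrough_norm_fourier (hq : q.FactorsThrough norm) :
    (𝓕 q).FactorsThrough norm := fun x y hxy ↦ by
  let A : E ≃ₗᵢ[ℝ] E := (ℝ ∙ (x - y))ᗮ.reflection
  have hqA : q ∘ A = q := funext fun z ↦ hq (A.norm_map z)
  rw [← (Submodule.reflection_sub hxy : A x = y), ← Real.fourier_comp_linearIsometry, hqA]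

theorem factorsThrough_norm_fourierInv (hq : q.FactorsThrough norm) :
    (𝓕⁻ q).FactorsThrough norm := fun x y hxy ↦ by
  rw [Real.fourierInv_eq_fourier_neg, Real.fourierInv_eq_fourier_neg]
  exact factorsThrough_norm_fourier hq (by rwa [norm_neg, norm_neg])

theorem fourierInv_eq_integral_cos_smul (hq : Integrable q) (heven : q.Even) (x : E) :
    𝓕⁻ q x = ∫ ξ, Complex.cos (2 * π * ⟪ξ, x⟫ : ℝ) • q ξ := by
  have hint : ∀ c : ℝ, Integrable fun ξ ↦ cexp ((c * ⟪ξ, x⟫ : ℝ) * I) • q ξ := fun c ↦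
    hq.bdd_smul 1 (Continuous.aestronglyMeasurable (by fun_prop))
      (.of_forall fun ξ ↦ (norm_exp_ofReal_mul_I _).le)
  have hneg : ∫ ξ, cexp ((-(2 * π) * ⟪ξ, x⟫ : ℝ) * I) • q ξ = 𝓕⁻ q x := by
    rw [Real.fourierInv_eq', ← integral_neg_eq_self]
    simp only [inner_neg_left, mul_neg, neg_mul, neg_neg, heven _]
  calc 𝓕⁻ q x = (2⁻¹ : ℂ) • (𝓕⁻ q x + 𝓕⁻ q x) := by
        rw [← two_smul ℂ, inv_smul_smul₀ two_ne_zero]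
    _ = (2⁻¹ : ℂ) • ((∫ ξ, cexp ((2 * π * ⟪ξ, x⟫ : ℝ) * I) • q ξ) +
          ∫ ξ, cexp ((-(2 * π) * ⟪ξ, x⟫ : ℝ) * I) • q ξ) := by rw [hneg, Real.fourierInv_eq']
    _ = ∫ ξ, Complex.cos (2 * π * ⟪ξ, x⟫ : ℝ) • q ξ := by
        rw [← integral_add (hint _) (hint _), ← integral_smul]
        refine integral_congr_ae (.of_forall fun ξ ↦ ?_)
        simp only [← add_smul, smul_smul, Complex.cos]
        push_cast
        ring_nf

theorem exists_norm_norm_smul_eq (E : Type*) [NormedAddCommGroup E] [NormedSpace ℝ E] :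
    ∃ e : E, ∀ x : E, ‖‖x‖ • e‖ = ‖x‖ := by
  cases subsingleton_or_nontrivial E
  · exact ⟨0, fun x ↦ by simp [Subsingleton.elim x 0]⟩
  · obtain ⟨e, he⟩ := exists_norm_eq E zero_le_one
    exact ⟨e, fun x ↦ by rw [norm_smul, he, norm_norm, mul_one]⟩

theorem exists_contDiff_fourierInv_eq_norm_sq [CompleteSpace F] (hq : Continuous q)
    (hc : HasCompactSupport q) (hrad : q.FactorsThrough norm) :
    ∃ p : ℝ → F, ContDiff ℝ ∞ p ∧ ∀ x, 𝓕⁻ q x = p (‖x‖ ^ 2) := by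
  obtain ⟨e, he⟩ := exists_norm_norm_smul_eq E
  let H : ℂ → F := fun z ↦ ∫ ξ, cosSqrt ((2 * π * ⟪ξ, e⟫ : ℝ) ^ 2 * z) • q ξ
  have hcos := differentiable_cosSqrt.continuous
  have hcos' : Continuous (deriv cosSqrt) :=
    (differentiable_cosSqrt.contDiff (n := 1)).continuous_deriv le_rfl
  have hH : Differentiable ℂ H := by
    refine differentiable_integral_smul_of_hasCompactSupport (fun z ↦ by fun_prop)
      (fun ξ ↦ differentiable_cosSqrt.comp (differentiable_id.const_mul _)) ?_ hq hc
    simp only [deriv_comp_mul_left]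
    fun_prop
  refine ⟨fun t ↦ H t, (hH.contDiff.restrict_scalars ℝ).comp ofRealCLM.contDiff, fun x ↦ ?_⟩
  have heven : q.Even := fun ξ ↦ hrad (norm_neg ξ)
  calc 𝓕⁻ q x = 𝓕⁻ q (‖x‖ • e) := factorsThrough_norm_fourierInv hrad (he x).symm
    _ = ∫ ξ, Complex.cos (2 * π * ⟪ξ, ‖x‖ • e⟫ : ℝ) • q ξ :=
      fourierInv_eq_integral_cos_smul (hq.integrable_of_hasCompactSupport hc) heven _
    _ = H (‖x‖ ^ 2 : ℝ) := by
      simp only [H, inner_smul_right, ← cosSqrt_sq]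
      push_cast
      ring_nf

end Fourier

theorem hasCompactSupport_comp_norm_sq {E F : Type*} [NormedAddCommGroup E] [ProperSpace E] [Zero F]
    {χ : ℝ → F} (hχ : HasCompactSupport χ) : HasCompactSupport fun x : E ↦ χ (‖x‖ ^ 2) := by
  have hnorm : Filter.Tendsto (fun x : E ↦ ‖x‖ ^ 2) (Filter.cocompact E) (Filter.cocompact ℝ) :=
    ((Filter.tendsto_pow_atTop two_ne_zero).comp tendsto_norm_cocompact_atTop).mono_right
      atTop_le_cocompact
  rw [hasCompactSupport_iff_eventuallyEq, Filter.coclosedCompact_eq_cocompact] at hχ ⊢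
  exact hnorm.eventually hχ

theorem gaussians_span_dense_general {E : Type*} [NormedAddCommGroup E] [InnerProductSpace ℝ E]
    [FiniteDimensional ℝ E] {y : ℝ} (hy : 0 < y) (f : 𝓢(E, ℂ))
    (hf : FactorsThrough f (norm : E → ℝ)) :
    f ∈ closure (Submodule.span ℂ (gaussianSet E y) : Set 𝓢(E, ℂ)) := by
  borelize E
  have hcutoff := mem_closure_hasCompactSupport_comp_smul
    (hasTemperateGrowth_norm_sq E) (𝓕 f)
  have hcont : Continuous fun g : 𝓢(E, ℂ) ↦ 𝓕⁻ g := by fun_prop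
  rw [← FourierTransform.fourierInv_fourier_eq (F := 𝓢(E, ℂ)) f, ← closure_closure]
  refine map_mem_closure hcont hcutoff ?_
  rintro g ⟨χ, -, hc, hg⟩
  have hg' : ⇑g = fun x ↦ χ (‖x‖ ^ 2) • (𝓕 f : 𝓢(E, ℂ)) x := funext hg
  have hg_supp : HasCompactSupport g := hg' ▸ (hasCompactSupport_comp_norm_sq hc).smul_right
  have hg_rad : FactorsThrough g (norm : E → ℝ) := fun a b hab ↦ by
    rw [hg, hg, hab, SchwartzMap.fourier_coe, factorsThrough_norm_fourier hf hab]
  obtain ⟨p, hp, hgp⟩ := exists_contDiff_fourierInv_eq_norm_sq g.continuous hg_supp hg_rad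
  exact mem_closure_span_gaussianSet_of_contDiff hy hp fun x ↦ by
    rw [SchwartzMap.fourierInv_coe, hgp]

/-- The complex Gaussians `x ↦ exp(πiτ|x|²)` with `Im τ = y` (for any fixed `y > 0`) span a
dense subspace of the space of radial Schwartz functions on `ℝ^d`: every radial Schwartz
function lies in the closure of their `ℂ`-linear span in the Schwartz space topology. -/
theorem gaussians_span_dense (d : ℕ) (hd : 1 ≤ d) (y : ℝ) (hy : 0 < y)
    (G : Set (SchwartzMap (EuclideanSpace ℝ (Fin d)) ℂ))
    (hG : G = {g : SchwartzMap (EuclideanSpace ℝ (Fin d)) ℂ | ∃ τ : ℂ, τ.im = y ∧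
      ∀ x : EuclideanSpace ℝ (Fin d),
        g x = Complex.exp (Real.pi * Complex.I * τ * (‖x‖ : ℂ) ^ 2)})
    (f : SchwartzMap (EuclideanSpace ℝ (Fin d)) ℂ) (hf : IsRadial f) :
    f ∈ closure (Submodule.span ℂ G : Set (SchwartzMap (EuclideanSpace ℝ (Fin d)) ℂ)) := by
  subst hG
  exact gaussians_span_dense_general hy f fun _ _ h ↦ hf _ _ h

end
end
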